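/- arXiv:2311.01231 — 12 statements merged into one kernel-verified Lean document; each statement's English description precedes it below -/
import Mathlib

section
/- Let $c < -\frac{3}{2}$ be a real number. Then the cubic equation $2E(c-E)^2 + 1 = 0$ has exactly three real solutions $E_1 < E_2 < E_3$, all negative, and they satisfy $E_1 < c < E_2 < -\frac{1}{2} < E_3 < 0$. -/
/-- For `c < -3/2`, the cubic `2E(c-E)² + 1 = 0` has exactly three real roots
`E₁ < E₂ < E₃`, all negative, satisfying `E₁ < c < E₂ < -1/2 < E₃ < 0`. -/
theorem stmt_1 (c : ℝ) (hc : c < -(3 / 2)) :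
    ∃ E1 E2 E3 : ℝ, E1 < E2 ∧ E2 < E3 ∧
      2 * E1 * (c - E1) ^ 2 + 1 = 0 ∧
      2 * E2 * (c - E2) ^ 2 + 1 = 0 ∧
      2 * E3 * (c - E3) ^ 2 + 1 = 0 ∧
      (∀ E : ℝ, 2 * E * (c - E) ^ 2 + 1 = 0 → E = E1 ∨ E = E2 ∨ E = E3) ∧
      E1 < 0 ∧ E2 < 0 ∧ E3 < 0 ∧
      E1 < c ∧ c < E2 ∧ E2 < -(1 / 2) ∧ -(1 / 2) < E3 ∧ E3 < 0 := by
  have hcont : Continuous (fun E : ℝ => 2 * E * (c - E) ^ 2 + 1) := by fun_prop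
  have hm : 2 * (-(1 / 2)) * (c - (-(1 / 2))) ^ 2 + 1 < 0 := by nlinarith
  obtain ⟨a, ⟨ha1, ha2⟩, ha⟩ := intermediate_value_Ioo (show c - 1 ≤ c by linarith)
    hcont.continuousOn (show (0 : ℝ) ∈ Set.Ioo _ _ from ⟨by norm_num; nlinarith, by norm_num⟩)
  obtain ⟨b, ⟨hb1, hb2⟩, hb⟩ := intermediate_value_Ioo' (show c ≤ -(1 / 2) by linarith)
    hcont.continuousOn (show (0 : ℝ) ∈ Set.Ioo _ _ from ⟨hm, by norm_num⟩)
  obtain ⟨d, ⟨hd1, hd2⟩, hd⟩ := intermediate_value_Ioo (show -(1 / 2) ≤ (0 : ℝ) by norm_num)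
    hcont.continuousOn (show (0 : ℝ) ∈ Set.Ioo _ _ from ⟨hm, by norm_num⟩)
  simp only at ha hb hd
  have key : ∀ x : ℝ, 2 * x * (c - x) ^ 2 + 1 = 0 → x ≠ a → x ≠ b → x + a + b = 2 * c := by
    intro x hx hxa hxb
    have hab : a - b ≠ 0 := by intro h; linarith
    have h1 : (x - a) * ((x ^ 2 + x * a + a ^ 2) - 2 * c * (x + a) + c ^ 2) = 0 := by
      linear_combination (hx - ha) / 2
    have h2 : (x - b) * ((x ^ 2 + x * b + b ^ 2) - 2 * c * (x + b) + c ^ 2) = 0 := by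
      linear_combination (hx - hb) / 2
    have h1' := (mul_eq_zero.mp h1).resolve_left (sub_ne_zero.mpr hxa)
    have h2' := (mul_eq_zero.mp h2).resolve_left (sub_ne_zero.mpr hxb)
    have h3 : (a - b) * (x + a + b - 2 * c) = 0 := by linear_combination h1' - h2'
    linarith [(mul_eq_zero.mp h3).resolve_left hab]
  refine ⟨a, b, d, by linarith, by linarith, ha, hb, hd, ?_, by linarith, by linarith, hd2,
    ha2, hb1, hb2, hd1, hd2⟩
  intro x hx
  by_cases hxa : x = a
  · exact Or.inl hxa
  by_cases hxb : x = b
  · exact Or.inr (Or.inl hxb)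
  have h4 := key x hx hxa hxb
  have h5 := key d hd (by intro h; linarith) (by intro h; linarith)
  exact Or.inr (Or.inr (by linarith))
end

section
/- Let $-\frac{3}{2} < c < 0$ be a real number. Then the cubic equation $2E(c-E)^2 + 1 = 0$ has exactly one real solution $E^u$, and it satisfies $-2 < E^u < -2^{-1/3} < 0$; moreover $E^u < c$ and $-2^{-1/3} < E^u - c < -\frac{1}{2}$. -/
/-- For `-3/2 < c < 0`, the cubic `2E(c-E)² + 1 = 0` has exactly one real root `Eᵘ`,
which satisfies `-2 < Eᵘ < -2^(-1/3) < 0`, `Eᵘ < c` and `-2^(-1/3) < Eᵘ - c < -1/2`. -/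
theorem stmt_2 (c : ℝ) (hc1 : -(3 / 2) < c) (hc2 : c < 0) :
    ∃ E : ℝ, 2 * E * (c - E) ^ 2 + 1 = 0 ∧
      (∀ E' : ℝ, 2 * E' * (c - E') ^ 2 + 1 = 0 → E' = E) ∧
      -2 < E ∧ E < -(2 : ℝ) ^ (-(1 / 3) : ℝ) ∧ -(2 : ℝ) ^ (-(1 / 3) : ℝ) < 0 ∧
      E < c ∧ -(2 : ℝ) ^ (-(1 / 3) : ℝ) < E - c ∧ E - c < -(1 / 2) := by
  obtain ⟨a, ha⟩ : ∃ a : ℝ, a = (2 : ℝ) ^ (-(1 / 3) : ℝ) := ⟨_, rfl⟩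
  rw [← ha]
  have ha0 : 0 < a := by rw [ha]; positivity
  have ha3 : 2 * a ^ 3 = 1 := by
    rw [ha, ← Real.rpow_natCast, ← Real.rpow_mul (by norm_num)]
    norm_num [Real.rpow_neg_one]
  have hah : 1 / 2 < a := by
    by_contra h
    have h1 : a ^ 3 ≤ (1 / 2) ^ 3 := pow_le_pow_left₀ ha0.le (not_lt.mp h) 3
    norm_num at h1
    linarith
  have hcont : ContinuousOn (fun L : ℝ => 2 * (L + c) * L ^ 2 + 1) (Set.Icc (-a) (-(1 / 2))) := by
    fun_prop
  have hmem : (0 : ℝ) ∈ Set.Ioo ((fun L : ℝ => 2 * (L + c) * L ^ 2 + 1) (-a))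
      ((fun L : ℝ => 2 * (L + c) * L ^ 2 + 1) (-(1 / 2))) := by
    constructor
    · have : c * a ^ 2 < 0 := mul_neg_of_neg_of_pos hc2 (by positivity)
      simp only
      linarith [show 2 * (-a + c) * (-a) ^ 2 + 1 = -(2 * a ^ 3) + 2 * (c * a ^ 2) + 1 by ring]
    · simp only
      linarith [show 2 * (-(1 / 2) + c) * (-(1 / 2)) ^ 2 + 1 = c / 2 + 3 / 4 by ring]
  obtain ⟨L, ⟨hL1, hL2⟩, hL⟩ := intermediate_value_Ioo (by linarith) hcont hmem
  simp only at hL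
  have hq1 : 1 / 4 < L ^ 2 := by nlinarith
  have hq2 : L ^ 2 < a ^ 2 := by nlinarith
  refine ⟨L + c, by linarith [show 2 * (L + c) * (c - (L + c)) ^ 2 = 2 * (L + c) * L ^ 2 by ring],
    ?_, by nlinarith, ?_, by linarith, by linarith, by linarith, by linarith⟩
  · intro x hx
    have hx0 : x < 0 := by
      by_contra h
      have : 0 ≤ x * (c - x) ^ 2 := mul_nonneg (not_lt.mp h) (sq_nonneg _)
      linarith
    rcases le_or_gt c x with h | h
    · exfalso
      have h1 : (x - c) ^ 2 < (x + 3 / 2) ^ 2 :=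
        pow_lt_pow_left₀ (by linarith) (by linarith) (by norm_num)
      have h2 : 0 < -x * ((x + 3 / 2) ^ 2 - (x - c) ^ 2) := mul_pos (by linarith) (by linarith)
      have h3 : 0 ≤ (x + 1 / 2) ^ 2 * (x + 2) := mul_nonneg (sq_nonneg _) (by linarith)
      linarith [show 2 * ((x + 1 / 2) ^ 2 * (x + 2)) + 2 * (-x * ((x + 3 / 2) ^ 2 - (x - c) ^ 2))
        = 2 * x * (c - x) ^ 2 + 1 by ring]
    · have key : ∀ M N : ℝ, M < N → N < 0 → (-(N + c)) * N ^ 2 < (-(M + c)) * M ^ 2 := by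
        intro M N h1 h2
        have h3 : N ^ 2 < M ^ 2 := by nlinarith
        exact mul_lt_mul'' (by linarith) h3 (by linarith) (sq_nonneg _)
      have hx' : 2 * ((x - c) + c) * (x - c) ^ 2 + 1 = 0 := by
        rw [← hx]; ring
      rcases lt_trichotomy (x - c) L with h1 | h1 | h1
      · have := key _ _ h1 (by linarith)
        linarith
      · linarith
      · have := key _ _ h1 (by linarith)
        linarith
  · by_contra h
    have h1 : -(L + c) * L ^ 2 < a * a ^ 2 := by
      apply mul_lt_mul' (by linarith) hq2 (sq_nonneg _) ha0
    linarith [show a * a ^ 2 = a ^ 3 by ring]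
end

section
/- Let $c < -\frac{3}{2}$ and let $E_1 < E_2 < E_3$ be the three real roots of $2E(c-E)^2 + 1 = 0$. Then for every real $E < 0$ with $2E(E-c)^2 + 1 \ge 0$, either $E_1 \le E \le E_2$ or $E_3 \le E < 0$. Moreover $E_2 - c < 1 < E_3 - c$; hence, setting $L := E - c$: if $E \le E_2$ then $L \le E_2 - c < 1$, while if $E \ge E_3$ then $1 < E_3 - c \le L < -c$. -/
/-- Lemma 3.1 of the paper for `c < -3/2`: given the three roots `E₁ < E₂ < E₃` of
`2E(c-E)² + 1 = 0`, every `E < 0` with `2E(E-c)² + 1 ≥ 0` lies in `[E₁,E₂]` or in `[E₃,0)`;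
moreover `E₂ - c < 1 < E₃ - c`, so with `L := E - c`: if `E ≤ E₂` then `L ≤ E₂ - c < 1`,
and if `E ≥ E₃` then `1 < E₃ - c ≤ L < -c`. -/
theorem stmt_3 (c E1 E2 E3 : ℝ) (hc : c < -(3 / 2))
    (h12 : E1 < E2) (h23 : E2 < E3)
    (hE1 : 2 * E1 * (c - E1) ^ 2 + 1 = 0)
    (hE2 : 2 * E2 * (c - E2) ^ 2 + 1 = 0)
    (hE3 : 2 * E3 * (c - E3) ^ 2 + 1 = 0) :
    (∀ E : ℝ, E < 0 → 0 ≤ 2 * E * (E - c) ^ 2 + 1 →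
      (E1 ≤ E ∧ E ≤ E2) ∨ (E3 ≤ E ∧ E < 0)) ∧
    E2 - c < 1 ∧ 1 < E3 - c ∧
    (∀ E : ℝ, E < 0 → 0 ≤ 2 * E * (E - c) ^ 2 + 1 →
      (E ≤ E2 → E - c ≤ E2 - c ∧ E2 - c < 1) ∧
      (E3 ≤ E → 1 < E3 - c ∧ E3 - c ≤ E - c ∧ E - c < -c)) := by
  have a12 : E1^2+E1*E2+E2^2-2*c*(E1+E2)+c^2 = 0 := by
    apply mul_left_cancel₀ (sub_ne_zero.2 h12.ne)
    linear_combination (hE1-hE2)/2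
  have a23 : E2^2+E2*E3+E3^2-2*c*(E2+E3)+c^2 = 0 := by
    apply mul_left_cancel₀ (sub_ne_zero.2 h23.ne)
    linear_combination (hE2-hE3)/2
  have s : E1+E2+E3 = 2*c := by
    apply mul_left_cancel₀ (sub_ne_zero.2 (h12.trans h23).ne)
    linear_combination a12-a23
  have hs : E3 = 2*c-E1-E2 := by linarith
  have key : ∀ E : ℝ, 2*E*(E-c)^2+1 = 2*((E-E1)*(E-E2)*(E-E3)) := by
    intro E
    rw [hs]
    linear_combination hE1 + 2*(E-E1)*a12
  have pos : ∀ E : ℝ, 0 ≤ 2*E*(E-c)^2+1 → (E1 ≤ E ∧ E ≤ E2) ∨ E3 ≤ E := by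
    intro E h
    rw [key] at h
    by_contra hn
    push Not at hn
    obtain ⟨h1, h3⟩ := hn
    rcases lt_or_ge E E1 with h | h'
    · have := mul_pos (mul_pos (sub_pos.2 h) (sub_pos.2 (h.trans h12))) (sub_pos.2 h3)
      linarith
    · have h2 := h1 h'
      have h1' : E1 < E := by
        linarith
      have := mul_pos (mul_pos (sub_pos.2 h1') (sub_pos.2 h2)) (sub_pos.2 h3)
      linarith
  have hcc : E1 ≤ c := by
    rcases pos c (by norm_num) with h | h
    · exact h.1
    · linarith
  have k1 := key (c+1)
  have neg : (c+1-E1)*((c+1-E2)*(c+1-E3)) < 0 := by linarith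
  have neg2 : (c+1-E2)*(c+1-E3) < 0 := by
    by_contra h
    have := mul_nonneg (show 0 ≤ c+1-E1 by linarith) (not_lt.1 h)
    linarith
  have b : E2 - c < 1 ∧ 1 < E3 - c := by
    rcases mul_neg_iff.1 neg2 with h | h
    · constructor <;> linarith
    · linarith
  refine ⟨fun E h0 h => (pos E h).imp id (fun h => ⟨h, h0⟩), b.1, b.2, fun E h0 h =>
    ⟨fun h => ⟨by linarith, b.1⟩, fun h => ⟨b.2, by linarith, by linarith⟩⟩⟩
end

section
/- Let $-\frac{3}{2} < c < 0$ and let $E^u$ be the unique real root of $2E(c-E)^2 + 1 = 0$. Then every real $E < 0$ with $2E(E-c)^2 + 1 \ge 0$ satisfies $-2 < E^u \le E < 0$, and setting $L := E - c$ one has $-\frac{1}{\sqrt[3]{2}} < E^u - c \le L < -c$. -/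
/-- Lemma 3.1 of the paper for `-3/2 < c < 0`: with `Eᵘ` the unique root of
`2E(c-E)² + 1 = 0`, every `E < 0` with `2E(E-c)² + 1 ≥ 0` satisfies `-2 < Eᵘ ≤ E < 0`,
and `L := E - c` satisfies `-2^(-1/3) < Eᵘ - c ≤ L < -c`. -/
theorem stmt_4 (c Eu : ℝ) (hc1 : -(3 / 2) < c) (hc2 : c < 0)
    (hEu : 2 * Eu * (c - Eu) ^ 2 + 1 = 0)
    (hEuUnique : ∀ E' : ℝ, 2 * E' * (c - E') ^ 2 + 1 = 0 → E' = Eu) :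
    ∀ E : ℝ, E < 0 → 0 ≤ 2 * E * (E - c) ^ 2 + 1 →
      -2 < Eu ∧ Eu ≤ E ∧ E < 0 ∧
      -(2 : ℝ) ^ (-(1 / 3) : ℝ) < Eu - c ∧ Eu - c ≤ E - c ∧ E - c < -c := by
  intro E hE hf
  have hEu0 : Eu < 0 := by
    by_contra h
    push Not at h
    have := mul_nonneg h (sq_nonneg (c - Eu))
    linarith
  have hlt : Eu < c := by
    by_contra h
    push Not at h
    have h1 : 0 ≤ (Eu - c / 3) ^ 2 * (Eu - 4 * c / 3) :=
      mul_nonneg (sq_nonneg _) (by linarith)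
    have h2 : (-c) ^ 3 < (3 / 2 : ℝ) ^ 3 :=
      pow_lt_pow_left₀ (by linarith) (by linarith) (by norm_num)
    nlinarith [h1, h2]
  have hm2 : -2 < Eu := by
    by_contra h
    push Not at h
    have h1 : (1 / 2 : ℝ) ^ 2 < (c - Eu) ^ 2 :=
      pow_lt_pow_left₀ (by linarith) (by norm_num) (by norm_num)
    nlinarith [h1]
  have hle : Eu ≤ E := by
    by_contra h
    push Not at h
    have h1 : (c - Eu) ^ 2 < (c - E) ^ 2 :=
      pow_lt_pow_left₀ (by linarith) (by linarith) (by norm_num)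
    have h2 : 0 < (-E) * ((c - E) ^ 2 - (c - Eu) ^ 2) :=
      mul_pos (by linarith) (by linarith)
    have h3 : 0 ≤ (Eu - E) * (c - Eu) ^ 2 :=
      mul_nonneg (by linarith) (sq_nonneg _)
    nlinarith [h2, h3]
  have hL : -(2 : ℝ) ^ (-(1 / 3) : ℝ) < Eu - c := by
    have ht : ((2 : ℝ) ^ (-(1 / 3) : ℝ)) ^ 3 = 1 / 2 := by
      rw [← Real.rpow_natCast, ← Real.rpow_mul (by norm_num)]
      norm_num [Real.rpow_neg_one]
    have ht0 : 0 < (2 : ℝ) ^ (-(1 / 3) : ℝ) := by positivity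
    have h1 : (c - Eu) ^ 3 < 1 / 2 := by
      have : 0 < (-c) * (c - Eu) ^ 2 := mul_pos (by linarith) (by have : 0 < c - Eu := by linarith
                                                                  positivity)
      nlinarith [this]
    have h2 : c - Eu < (2 : ℝ) ^ (-(1 / 3) : ℝ) :=
      lt_of_pow_lt_pow_left₀ 3 ht0.le (by rw [ht]; exact h1)
    linarith
  exact ⟨hm2, hle, hE, hL, by linarith, by linarith⟩
end

section
/- With the interpolated function $K$ as in the context, for every $x \in \mathbb{R}$ one has $\partial_y K(x,y) < 0$ for all $1 < y < \Lambda_3$ and $\partial_y K(x,y) > 0$ for all $y > \Lambda_3$. Consequently, the critical points of $K$ in the region $\mathbb{R} \times (1,\infty)$ are exactly the points $(2\pi k, \Lambda_3)$ with $k \in \mathbb{Z}$. -/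
/-- The Kepler effective Hamiltonian `H₂(y) = -1/(2y²) - y`. -/
noncomputable def H2K (y : ℝ) : ℝ := -(1 / (2 * y ^ 2)) - y

/-- `F(x,y) = ½(y - Λ₃)² - cos(x/2) + B`. -/
noncomputable def Ffun (Λ3 B : ℝ) (x y : ℝ) : ℝ :=
  (y - Λ3) ^ 2 / 2 - Real.cos (x / 2) + B

/-- The interpolated function `K(x,y) = (1 - f(y)) H₂(y) + f(y) F(x,y)`. -/
noncomputable def Kfun (Λ3 B : ℝ) (f : ℝ → ℝ) (x y : ℝ) : ℝ :=
  (1 - f y) * H2K y + f y * Ffun Λ3 B x y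

/-- Claim (5.6) of the paper: `∂_y K < 0` for `1 < y < Λ₃` and `∂_y K > 0` for `y > Λ₃`;
consequently the critical points of `K` in `ℝ × (1,∞)` are exactly `(2πk, Λ₃)`, `k ∈ ℤ`. -/
theorem stmt_7 (Λ2 Λ3 ε0 B : ℝ) (f : ℝ → ℝ)
    (hΛ2 : 1 < Λ2) (hΛ23 : Λ2 < Λ3)
    (hε0 : 0 < ε0) (hε0' : ε0 < (Λ3 - Λ2) / 2)
    (hB : ∀ y ∈ Set.Icc (Λ2 + ε0) (Λ2 + 2 * ε0),
      (y - Λ3) ^ 2 / 2 + B + 1 + 1 / (2 * y ^ 2) + y ≤ 0)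
    (hf : ContDiff ℝ (⊤ : ℕ∞) f) (hfmono : Monotone f)
    (hfrange : ∀ y, f y ∈ Set.Icc (0 : ℝ) 1)
    (hf0 : ∀ y, y ≤ Λ2 + ε0 → f y = 0)
    (hf1 : ∀ y, Λ2 + 2 * ε0 ≤ y → f y = 1) :
    (∀ x y : ℝ, 1 < y → y < Λ3 → deriv (Kfun Λ3 B f x) y < 0) ∧
    (∀ x y : ℝ, Λ3 < y → 0 < deriv (Kfun Λ3 B f x) y) ∧
    (∀ x y : ℝ, 1 < y →
      ((deriv (fun x' => Kfun Λ3 B f x' y) x = 0 ∧ deriv (Kfun Λ3 B f x) y = 0) ↔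
        (∃ k : ℤ, x = 2 * Real.pi * k) ∧ y = Λ3)) := by
  have hd : ∀ x y : ℝ, 1 < y → HasDerivAt (Kfun Λ3 B f x)
      ((1 - f y) * (1 / y ^ 3 - 1) + f y * (y - Λ3)
        + deriv f y * (Ffun Λ3 B x y - H2K y)) y := by
    intro x y hy
    have hy0 : y ≠ 0 := by linarith
    have h1 : HasDerivAt f (deriv f y) y :=
      (hf.differentiable (by simp)).differentiableAt.hasDerivAt
    have h2 : HasDerivAt H2K (1 / y ^ 3 - 1) y := by
      have a := ((((hasDerivAt_id y).pow 2).const_mul 2).inv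
        (by simp [hy0])).neg.sub (hasDerivAt_id y)
      have e : H2K = (-(fun y : ℝ => 2 * (id ^ 2 : ℝ → ℝ) y)⁻¹ - id) := by
        funext z
        simp [H2K]
      rw [e]
      refine a.congr_deriv ?_
      simp
      field_simp
    have h3 : HasDerivAt (Ffun Λ3 B x) (y - Λ3) y := by
      have a := (((((hasDerivAt_id y).sub_const Λ3).pow 2).div_const 2).sub_const
        (Real.cos (x / 2))).add_const B
      refine a.congr_deriv ?_
      simp
    have := ((h1.const_sub 1).mul h2).add (h1.mul h3)
    refine this.congr_deriv ?_
    ring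
  have hout : ∀ y, Λ2 + 2 * ε0 < y → deriv f y = 0 := by
    intro y hy
    have : f =ᶠ[nhds y] fun _ => 1 := by
      filter_upwards [lt_mem_nhds hy] with z hz using hf1 z hz.le
    rw [this.deriv_eq]; simp
  have hin : ∀ y, y < Λ2 + ε0 → deriv f y = 0 := by
    intro y hy
    have : f =ᶠ[nhds y] fun _ => 0 := by
      filter_upwards [gt_mem_nhds hy] with z hz using hf0 z hz.le
    rw [this.deriv_eq]; simp
  have A : ∀ x y : ℝ, 1 < y → y < Λ3 → deriv (Kfun Λ3 B f x) y < 0 := by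
    intro x y hy hy3
    rw [(hd x y hy).deriv]
    have hneg : deriv f y * (Ffun Λ3 B x y - H2K y) ≤ 0 := by
      rcases lt_or_ge y (Λ2 + ε0) with h | h
      · simp [hin y h]
      rcases lt_or_ge (Λ2 + 2 * ε0) y with h' | h'
      · simp [hout y h']
      · apply mul_nonpos_of_nonneg_of_nonpos hfmono.deriv_nonneg
        have := hB y ⟨h, h'⟩
        have := Real.neg_one_le_cos (x / 2)
        unfold Ffun H2K
        linarith
    have h3 : 1 / y ^ 3 < 1 := by
      rw [div_lt_one (by positivity)]
      exact one_lt_pow₀ hy (by norm_num)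
    obtain ⟨f0, f1⟩ := hfrange y
    rcases f0.eq_or_lt with h | h
    · rw [← h]
      linarith
    · have := mul_neg_of_pos_of_neg h (sub_neg.2 hy3)
      have := mul_nonpos_of_nonneg_of_nonpos (sub_nonneg.2 f1) (sub_neg.2 h3).le
      linarith
  have Bp : ∀ x y : ℝ, Λ3 ≤ y → deriv (Kfun Λ3 B f x) y = y - Λ3 := by
    intro x y hy
    rw [(hd x y (by linarith)).deriv, hout y (by linarith), hf1 y (by linarith)]
    ring
  have C : ∀ x y : ℝ, Λ3 < y → 0 < deriv (Kfun Λ3 B f x) y := by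
    intro x y hy
    rw [Bp x y hy.le]; linarith
  refine ⟨A, C, ?_⟩
  intro x y hy
  have hx : deriv (fun x' => Kfun Λ3 B f x' Λ3) x = Real.sin (x / 2) / 2 := by
    have a := ((((hasDerivAt_id x).div_const 2).cos.const_sub ((Λ3 - Λ3) ^ 2 / 2)).add_const B)
    have e : (fun x' => Kfun Λ3 B f x' Λ3)
        = fun x' => (Λ3 - Λ3) ^ 2 / 2 - Real.cos (id x' / 2) + B := by
      funext z
      simp [Kfun, Ffun, hf1 Λ3 (by linarith)]
    rw [e, a.deriv]
    simp
    ring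
  have hs : Real.sin (x / 2) / 2 = 0 ↔ ∃ k : ℤ, x = 2 * Real.pi * k := by
    rw [div_eq_zero_iff, or_iff_left (by norm_num), Real.sin_eq_zero_iff]
    constructor
    · rintro ⟨k, hk⟩
      exact ⟨k, by linarith⟩
    · rintro ⟨k, hk⟩
      exact ⟨k, by linarith⟩
  constructor
  · rintro ⟨h1, h2⟩
    have hy3 : y = Λ3 := by
      rcases lt_trichotomy y Λ3 with h | h | h
      · exact absurd h2 (A x y hy h).ne
      · exact h
      · exact absurd h2 (C x y h).ne'
    subst hy3
    exact ⟨hs.1 (hx ▸ h1), rfl⟩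
  · rintro ⟨h1, rfl⟩
    exact ⟨hx.trans (hs.2 h1), by rw [Bp x y le_rfl]; ring⟩
end

section
/- With $K$ and the doubly interpolated function $\tilde H_2$ as in the context, the critical points of $\tilde H_2$ in the region $\mathbb{R} \times (1,\infty)$ are precisely the three points $(0,\Lambda_3)$, $(2\pi,\Lambda_3)$ and $(4\pi,\Lambda_3)$. -/
/-- `G(x,y) = ½x² + ½(y - Λ₃)²`. -/
noncomputable def Gfun (Λ3 : ℝ) (x y : ℝ) : ℝ := x ^ 2 / 2 + (y - Λ3) ^ 2 / 2

/-- `K̃(x,y) = (1 - g(x)) G(x,y) + g(x) K(x,y)`. -/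
noncomputable def Ktil (Λ3 B : ℝ) (f g : ℝ → ℝ) (x y : ℝ) : ℝ :=
  (1 - g x) * Gfun Λ3 x y + g x * Kfun Λ3 B f x y

/-- `G̃(x,y) = ½(x - 4π)² + ½(y - Λ₃)²`. -/
noncomputable def Gtil (Λ3 : ℝ) (x y : ℝ) : ℝ :=
  (x - 4 * Real.pi) ^ 2 / 2 + (y - Λ3) ^ 2 / 2

/-- The doubly interpolated function
`H̃₂(x,y) = g̃(x) K̃(x,y) + (1 - g̃(x)) G̃(x,y)`, with `g̃(x) = g(4π - x)`. -/
noncomputable def H2til (Λ3 B : ℝ) (f g : ℝ → ℝ) (x y : ℝ) : ℝ :=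
  g (4 * Real.pi - x) * Ktil Λ3 B f g x y + (1 - g (4 * Real.pi - x)) * Gtil Λ3 x y

open Real

theorem aux_deriv_ext (f : ℝ → ℝ) (hr : ∀ y, f y ∈ Set.Icc (0 : ℝ) 1) (y : ℝ)
    (h : f y = 0 ∨ f y = 1) : deriv f y = 0 := by
  rcases h with h | h
  · apply IsLocalMin.deriv_eq_zero
    exact Filter.Eventually.of_forall fun z => by rw [h]; exact (hr z).1
  · apply IsLocalMax.deriv_eq_zero
    exact Filter.Eventually.of_forall fun z => by rw [h]; exact (hr z).2

theorem aux_H2K (y : ℝ) (hy : 0 < y) : HasDerivAt H2K (1 / y ^ 3 - 1) y := by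
  have hd : (2 * y ^ 2 : ℝ) ≠ 0 := by positivity
  have h := ((((hasDerivAt_id y).pow 2).const_mul 2).inv hd).neg.sub (hasDerivAt_id y)
  have e : H2K = fun y => -(2 * y ^ 2)⁻¹ - y := by
    funext z; simp [H2K]
  rw [e]
  refine h.congr_deriv ?_
  simp
  field_simp

theorem aux_Kx (Λ3 B : ℝ) (f : ℝ → ℝ) (x y : ℝ) :
    HasDerivAt (fun x' => Kfun Λ3 B f x' y) (f y * (sin (x / 2) / 2)) x := by
  have h1 : HasDerivAt (fun x' : ℝ => cos (x' / 2)) (-sin (x / 2) * (1 / 2)) x :=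
    ((hasDerivAt_id x).div_const 2).cos
  have h := (((h1.const_sub ((y - Λ3) ^ 2 / 2)).add_const B).const_mul (f y)).const_add
    ((1 - f y) * H2K y)
  unfold Kfun Ffun
  refine h.congr_deriv ?_
  ring

theorem aux_Ky (Λ3 B : ℝ) (f : ℝ → ℝ) (x y : ℝ) (hy : 0 < y) (hf : DifferentiableAt ℝ f y) :
    HasDerivAt (fun y' => Kfun Λ3 B f x y')
      (deriv f y * (Ffun Λ3 B x y - H2K y) + (1 - f y) * (1 / y ^ 3 - 1) + f y * (y - Λ3)) y := by
  have hq : HasDerivAt (fun y' : ℝ => (y' - Λ3) ^ 2 / 2) (y - Λ3) y := by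
    have := ((((hasDerivAt_id y).sub_const Λ3).pow 2).div_const 2)
    refine this.congr_deriv ?_
    simp
  have hF : HasDerivAt (fun y' : ℝ => Ffun Λ3 B x y') (y - Λ3) y := by
    unfold Ffun
    exact (hq.sub_const _).add_const _
  have h := ((hf.hasDerivAt.const_sub 1).mul (aux_H2K y hy)).add (hf.hasDerivAt.mul hF)
  unfold Kfun
  refine h.congr_deriv ?_
  ring

theorem aux_Ktx (Λ3 B : ℝ) (f g : ℝ → ℝ) (x y : ℝ) (hg : DifferentiableAt ℝ g x) :
    HasDerivAt (fun x' => Ktil Λ3 B f g x' y)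
      (deriv g x * (Kfun Λ3 B f x y - Gfun Λ3 x y) + (1 - g x) * x
        + g x * (f y * (sin (x / 2) / 2))) x := by
  have hG : HasDerivAt (fun x' : ℝ => Gfun Λ3 x' y) x x := by
    have := ((((hasDerivAt_id x).pow 2).div_const 2)).add_const ((y - Λ3) ^ 2 / 2)
    unfold Gfun
    refine this.congr_deriv ?_
    simp
  have h := ((hg.hasDerivAt.const_sub 1).mul hG).add (hg.hasDerivAt.mul (aux_Kx Λ3 B f x y))
  unfold Ktil
  refine h.congr_deriv ?_
  ring

theorem aux_Kty (Λ3 B : ℝ) (f g : ℝ → ℝ) (x y : ℝ) (hy : 0 < y) (hf : DifferentiableAt ℝ f y) :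
    HasDerivAt (fun y' => Ktil Λ3 B f g x y')
      ((1 - g x) * (y - Λ3) + g x * (deriv f y * (Ffun Λ3 B x y - H2K y)
        + (1 - f y) * (1 / y ^ 3 - 1) + f y * (y - Λ3))) y := by
  have hG : HasDerivAt (fun y' : ℝ => Gfun Λ3 x y') (y - Λ3) y := by
    have := ((((hasDerivAt_id y).sub_const Λ3).pow 2).div_const 2).const_add (x ^ 2 / 2)
    unfold Gfun
    refine this.congr_deriv ?_
    simp
  exact (hG.const_mul _).add ((aux_Ky Λ3 B f x y hy hf).const_mul _)

theorem aux_core (Λ2 Λ3 ε0 B ε1 : ℝ) (f g : ℝ → ℝ)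
    (hΛ2 : 1 < Λ2) (hΛ23 : Λ2 < Λ3)
    (hε0 : 0 < ε0) (hε0' : ε0 < (Λ3 - Λ2) / 2)
    (hB : ∀ y ∈ Set.Icc (Λ2 + ε0) (Λ2 + 2 * ε0),
      (y - Λ3) ^ 2 / 2 + B + 1 + 1 / (2 * y ^ 2) + y ≤ 0)
    (hf : ContDiff ℝ (⊤ : ℕ∞) f) (hfmono : Monotone f)
    (hfrange : ∀ y, f y ∈ Set.Icc (0 : ℝ) 1)
    (hf0 : ∀ y, y ≤ Λ2 + ε0 → f y = 0)
    (hf1 : ∀ y, Λ2 + 2 * ε0 ≤ y → f y = 1)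
    (hε1 : 0 < ε1) (hε1' : ε1 < Real.pi)
    (hg : ContDiff ℝ (⊤ : ℕ∞) g) (hgmono : Monotone g)
    (hgrange : ∀ x, g x ∈ Set.Icc (0 : ℝ) 1)
    (hg0 : ∀ x, x ≤ -(2 * ε1) → g x = 0)
    (hg1 : ∀ x, -ε1 ≤ x → g x = 1) (x y : ℝ) (hx2 : x ≤ 2 * Real.pi) (hy : 1 < y) :
      (deriv (fun x' => H2til Λ3 B f g x' y) x = 0 ∧
        deriv (fun y' => H2til Λ3 B f g x y') y = 0) ↔
        ((x = 0 ∧ y = Λ3) ∨ (x = 2 * Real.pi ∧ y = Λ3)) := by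
  have hpi := Real.pi_pos
  have hy0 : 0 < y := by linarith
  have hfd : Differentiable ℝ f := hf.differentiable (by simp)
  have hgd : Differentiable ℝ g := hg.differentiable (by simp)
  have ex : (fun x' => H2til Λ3 B f g x' y) =ᶠ[nhds x] fun x' => Ktil Λ3 B f g x' y := by
    have : ∀ᶠ x' in nhds x, x' < 4 * π := eventually_lt_nhds (by linarith)
    filter_upwards [this] with z hz
    have : g (4 * π - z) = 1 := hg1 _ (by linarith)
    simp [H2til, this]
  have ey : (fun y' => H2til Λ3 B f g x y') = fun y' => Ktil Λ3 B f g x y' := by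
    funext z
    have : g (4 * π - x) = 1 := hg1 _ (by linarith)
    simp [H2til, this]
  rw [ex.deriv_eq, ey, (aux_Ktx Λ3 B f g x y (hgd x)).deriv,
    (aux_Kty Λ3 B f g x y hy0 (hfd y)).deriv]
  have hf' : 0 ≤ deriv f y := hfmono.deriv_nonneg
  have hg' : 0 ≤ deriv g x := hgmono.deriv_nonneg
  have hfz := aux_deriv_ext f hfrange y
  have hgz := aux_deriv_ext g hgrange x
  obtain ⟨hf_0, hf_1⟩ := hfrange y
  obtain ⟨hg_0, hg_1⟩ := hgrange x
  have hH2 : 1 / y ^ 3 - 1 < 0 := by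
    have : 1 / y ^ 3 < 1 := by
      rw [div_lt_one (by positivity)]
      exact one_lt_pow₀ hy (by norm_num)
    linarith
  have hB1 : B + 1 ≤ 0 := by
    have h := hB (Λ2 + ε0) ⟨le_refl _, by linarith⟩
    have h1 : 0 ≤ 1 / (2 * (Λ2 + ε0) ^ 2) := by positivity
    nlinarith [sq_nonneg (Λ2 + ε0 - Λ3)]
  have hH2neg : H2K y ≤ 0 := by
    have h1 : 0 ≤ 1 / (2 * y ^ 2) := by positivity
    unfold H2K; linarith
  have hcos := Real.neg_one_le_cos (x / 2)
  have hKG : Kfun Λ3 B f x y - Gfun Λ3 x y ≤ 0 := by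
    have h1 : (1 - f y) * H2K y ≤ 0 := mul_nonpos_of_nonneg_of_nonpos (by linarith) hH2neg
    have h2 : Ffun Λ3 B x y ≤ Gfun Λ3 x y := by
      unfold Ffun Gfun; nlinarith [sq_nonneg x]
    have h3 : 0 ≤ Gfun Λ3 x y := by unfold Gfun; positivity
    have h4 : f y * Ffun Λ3 B x y ≤ f y * Gfun Λ3 x y := mul_le_mul_of_nonneg_left h2 hf_0
    have h5 : f y * Gfun Λ3 x y ≤ Gfun Λ3 x y := mul_le_of_le_one_left h3 hf_1
    unfold Kfun; linarith
  have hKy : deriv f y * (Ffun Λ3 B x y - H2K y) + (1 - f y) * (1 / y ^ 3 - 1)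
      + f y * (y - Λ3) = 0 → y = Λ3 := by
    intro h
    rcases le_total y (Λ2 + ε0) with h1 | h1
    · have h2 := hf0 y h1
      rw [hfz (Or.inl h2), h2] at h
      linarith
    rcases le_total (Λ2 + 2 * ε0) y with h3 | h3
    · have h2 := hf1 y h3
      rw [hfz (Or.inr h2), h2] at h
      linarith
    exfalso
    have h4 := hB y ⟨h1, h3⟩
    have h5 : Ffun Λ3 B x y - H2K y ≤ 0 := by unfold Ffun H2K; linarith
    have h6 := mul_nonpos_of_nonneg_of_nonpos hf' h5
    have h7 : y - Λ3 < 0 := by linarith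
    have h8 : (1 - f y) * (1 / y ^ 3 - 1) ≤ 0 :=
      mul_nonpos_of_nonneg_of_nonpos (by linarith) hH2.le
    have h9 : f y * (y - Λ3) ≤ 0 := mul_nonpos_of_nonneg_of_nonpos hf_0 h7.le
    have h10 : f y * (y - Λ3) = 0 := by linarith
    have h11 : (1 - f y) * (1 / y ^ 3 - 1) = 0 := by linarith
    rcases mul_eq_zero.1 h10 with h | h <;> rcases mul_eq_zero.1 h11 with h' | h' <;> linarith
  have hfL : y = Λ3 → f y = 1 := fun h => hf1 y (by linarith)
  rcases lt_or_ge x 0 with hx | hx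
  · constructor
    · rintro ⟨h1, h2⟩
      exfalso
      have a1 := mul_nonpos_of_nonneg_of_nonpos hg' hKG
      have a2 : (1 - g x) * x ≤ 0 := mul_nonpos_of_nonneg_of_nonpos (by linarith) hx.le
      rcases le_or_gt x (-(2 * ε1)) with c | c
      · have e := hg0 x c
        rw [hgz (Or.inl e), e] at h1
        linarith
      have hs : sin (x / 2) < 0 := Real.sin_neg_of_neg_of_neg_pi_lt (by linarith) (by linarith)
      have a3 : g x * (f y * (sin (x / 2) / 2)) ≤ 0 :=
        mul_nonpos_of_nonneg_of_nonpos hg_0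
          (mul_nonpos_of_nonneg_of_nonpos hf_0 (by linarith))
      have b2 : (1 - g x) * x = 0 := by linarith
      have b3 : g x * (f y * (sin (x / 2) / 2)) = 0 := by linarith
      have hgx : g x = 1 := by
        rcases mul_eq_zero.1 b2 with h | h <;> linarith
      rw [hgx] at b3 h2
      have hyL := hKy (by linarith)
      rw [hfL hyL] at b3
      linarith
    · rintro (⟨h, -⟩ | ⟨h, -⟩) <;> linarith
  · have hgx : g x = 1 := hg1 x (by linarith)
    rw [hgz (Or.inr hgx), hgx]
    constructor
    · rintro ⟨h1, h2⟩
      have hyL := hKy (by linarith)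
      rw [hfL hyL] at h1
      have hs : sin (x / 2) = 0 := by linarith
      rcases hx.eq_or_lt with h | h
      · exact Or.inl ⟨h.symm, hyL⟩
      rcases hx2.eq_or_lt with h' | h'
      · exact Or.inr ⟨h', hyL⟩
      have := Real.sin_pos_of_pos_of_lt_pi (x := x / 2) (by linarith) (by linarith)
      linarith
    · intro h
      have hyL : y = Λ3 := by rcases h with h | h <;> exact h.2
      have hs : sin (x / 2) = 0 := by
        rcases h with h | h
        · simp [h.1]
        · rw [h.1]; simp
      have e := hfL hyL
      rw [hs, hfz (Or.inr e), e, hyL]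
      constructor <;> ring

theorem aux_symm (Λ3 B ε1 : ℝ) (f g : ℝ → ℝ) (hε1 : 0 < ε1)
    (hg1 : ∀ x, -ε1 ≤ x → g x = 1) (x y : ℝ) :
    H2til Λ3 B f g (4 * π - x) y = H2til Λ3 B f g x y := by
  have hpi := Real.pi_pos
  have hK : Kfun Λ3 B f (4 * π - x) y = Kfun Λ3 B f x y := by
    unfold Kfun Ffun
    rw [show (4 * π - x) / 2 = 2 * π - x / 2 by ring, Real.cos_two_pi_sub]
  have e : 4 * π - (4 * π - x) = x := by ring
  unfold H2til Ktil
  rw [hK, e]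
  unfold Gtil Gfun
  rcases le_total x (2 * π) with h | h
  · rw [hg1 (4 * π - x) (by linarith)]; ring
  · rw [hg1 x (by linarith)]; ring

/-- Lemma 5.1 of the paper: the critical points of `H̃₂` in `ℝ × (1,∞)` are exactly
`(0, Λ₃)`, `(2π, Λ₃)` and `(4π, Λ₃)`. -/
theorem stmt_8 (Λ2 Λ3 ε0 B ε1 : ℝ) (f g : ℝ → ℝ)
    (hΛ2 : 1 < Λ2) (hΛ23 : Λ2 < Λ3)
    (hε0 : 0 < ε0) (hε0' : ε0 < (Λ3 - Λ2) / 2)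
    (hB : ∀ y ∈ Set.Icc (Λ2 + ε0) (Λ2 + 2 * ε0),
      (y - Λ3) ^ 2 / 2 + B + 1 + 1 / (2 * y ^ 2) + y ≤ 0)
    (hf : ContDiff ℝ (⊤ : ℕ∞) f) (hfmono : Monotone f)
    (hfrange : ∀ y, f y ∈ Set.Icc (0 : ℝ) 1)
    (hf0 : ∀ y, y ≤ Λ2 + ε0 → f y = 0)
    (hf1 : ∀ y, Λ2 + 2 * ε0 ≤ y → f y = 1)
    (hε1 : 0 < ε1) (hε1' : ε1 < Real.pi)
    (hg : ContDiff ℝ (⊤ : ℕ∞) g) (hgmono : Monotone g)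
    (hgrange : ∀ x, g x ∈ Set.Icc (0 : ℝ) 1)
    (hg0 : ∀ x, x ≤ -(2 * ε1) → g x = 0)
    (hg1 : ∀ x, -ε1 ≤ x → g x = 1) :
    ∀ x y : ℝ, 1 < y →
      ((deriv (fun x' => H2til Λ3 B f g x' y) x = 0 ∧
        deriv (fun y' => H2til Λ3 B f g x y') y = 0) ↔
        ((x = 0 ∧ y = Λ3) ∨ (x = 2 * Real.pi ∧ y = Λ3) ∨ (x = 4 * Real.pi ∧ y = Λ3))) := by
  intro x y hy
  have hpi := Real.pi_pos
  have core := fun x hx => aux_core Λ2 Λ3 ε0 B ε1 f g hΛ2 hΛ23 hε0 hε0' hB hf hfmono hfrange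
    hf0 hf1 hε1 hε1' hg hgmono hgrange hg0 hg1 x y hx hy
  rcases le_total x (2 * π) with h | h
  · rw [core x h]
    constructor
    · rintro (h | h)
      · exact Or.inl h
      · exact Or.inr (Or.inl h)
    · rintro (h | h | h)
      · exact Or.inl h
      · exact Or.inr h
      · linarith [h.1]
  · have hs := aux_symm Λ3 B ε1 f g hε1 hg1
    have e1 : deriv (fun x' => H2til Λ3 B f g x' y) x
        = -deriv (fun x' => H2til Λ3 B f g x' y) (4 * π - x) := by
      rw [← deriv_comp_const_sub]
      simp only [hs]
    have e2 : (fun y' => H2til Λ3 B f g x y') = fun y' => H2til Λ3 B f g (4 * π - x) y' := by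
      funext z; exact (hs x z).symm
    rw [e1, e2, neg_eq_zero, core (4 * π - x) (by linarith)]
    constructor
    · rintro (h | h)
      · exact Or.inr (Or.inr ⟨by linarith [h.1], h.2⟩)
      · exact Or.inr (Or.inl ⟨by linarith [h.1], h.2⟩)
    · rintro (h | h | h)
      · linarith [h.1]
      · exact Or.inr ⟨by linarith [h.1], h.2⟩
      · exact Or.inl ⟨by linarith [h.1], h.2⟩
end

section
/- Let $\Lambda_3 > 1$ and $t \in (0,1)$, and define $Q : (0,\infty) \to \mathbb{R}$ by $Q(y) = \frac{1-t}{2}(y-\Lambda_3)^2 + t\big(-\frac{1}{2y^2} - y\big)$. Then there exists a unique $a \in (0,\Lambda_3)$ with $Q'(a) = 0$; moreover $a \in (0,1)$, $Q$ is strictly increasing on $(0,a]$ and strictly decreasing on $[a,\Lambda_3]$. -/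
theorem aux_deriv (L t y : ℝ) (hy : 0 < y) :
    HasDerivAt (fun y : ℝ => (1 - t) / 2 * (y - L) ^ 2 + t * (-(1 / (2 * y ^ 2)) - y))
      ((1 - t) * (y - L) + t * (y ^ (-3 : ℤ) - 1)) y := by
  have h1 : HasDerivAt (fun y : ℝ => (y - L) ^ 2) (2 * (y - L)) y := by
    simpa using ((hasDerivAt_id y).sub_const L).fun_pow 2
  have h2 : HasDerivAt (fun y : ℝ => 2 * y ^ 2) (2 * (2 * y)) y := by
    simpa using ((hasDerivAt_id y).pow 2).const_mul 2
  have h3 := (h2.fun_inv (by positivity)).fun_neg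
  have h4 := (h1.const_mul ((1 - t) / 2)).fun_add ((h3.fun_sub (hasDerivAt_id y)).const_mul t)
  simp only [one_div]
  refine HasDerivAt.congr_deriv h4 ?_
  have e : y ^ (-3 : ℤ) = (y ^ 3)⁻¹ := by
    rw [zpow_neg]; rfl
  rw [e]
  field_simp

theorem aux_conv (L t x y : ℝ) (ht0 : 0 < t) (hx : 0 < x) (hxy : x < y) (hyL : y < L) :
    (L - x) * ((1 - t) * (y - L) + t * (y ^ (-3 : ℤ) - 1)) ≤
      (L - y) * ((1 - t) * (x - L) + t * (x ^ (-3 : ℤ) - 1)) +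
      (y - x) * ((1 - t) * (L - L) + t * (L ^ (-3 : ℤ) - 1)) := by
  have hc := (convexOn_zpow (𝕜 := ℝ) (-3)).secant_mono_aux1 (x := x) (y := y) (z := L)
    hx (show (0:ℝ) < L by linarith) hxy hyL
  nlinarith [mul_le_mul_of_nonneg_left hc ht0.le]

/-- The interpolation `Q(y) = (1-t)/2 (y-Λ₃)² + t(-1/(2y²) - y)` has, for `Λ₃ > 1` and
`t ∈ (0,1)`, a unique critical point `a ∈ (0,Λ₃)`; moreover `a ∈ (0,1)`, `Q` is strictly
increasing on `(0,a]` and strictly decreasing on `[a,Λ₃]`. -/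
theorem stmt_9 (Λ3 t : ℝ) (hΛ3 : 1 < Λ3) (ht0 : 0 < t) (ht1 : t < 1) :
    ∃ a : ℝ, 0 < a ∧ a < Λ3 ∧
      deriv (fun y : ℝ => (1 - t) / 2 * (y - Λ3) ^ 2 + t * (-(1 / (2 * y ^ 2)) - y)) a = 0 ∧
      (∀ a' : ℝ, 0 < a' → a' < Λ3 →
        deriv (fun y : ℝ => (1 - t) / 2 * (y - Λ3) ^ 2 + t * (-(1 / (2 * y ^ 2)) - y)) a' = 0 →
        a' = a) ∧
      a < 1 ∧
      StrictMonoOn (fun y : ℝ => (1 - t) / 2 * (y - Λ3) ^ 2 + t * (-(1 / (2 * y ^ 2)) - y))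
        (Set.Ioc 0 a) ∧
      StrictAntiOn (fun y : ℝ => (1 - t) / 2 * (y - Λ3) ^ 2 + t * (-(1 / (2 * y ^ 2)) - y))
        (Set.Icc a Λ3) := by
  set Q := (fun y : ℝ => (1 - t) / 2 * (y - Λ3) ^ 2 + t * (-(1 / (2 * y ^ 2)) - y)) with hQ
  obtain ⟨G, hG⟩ : ∃ G : ℝ → ℝ, G = fun y => (1 - t) * (y - Λ3) + t * (y ^ (-3 : ℤ) - 1) :=
    ⟨_, rfl⟩
  have hd : ∀ y, 0 < y → HasDerivAt Q (G y) y := fun y hy => by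
    rw [hG]; exact aux_deriv Λ3 t y hy
  have hconv : ∀ x y, 0 < x → x < y → y < Λ3 →
      (Λ3 - x) * G y ≤ (Λ3 - y) * G x + (y - x) * G Λ3 := fun x y hx hxy hy => by
    rw [hG]; exact aux_conv Λ3 t x y ht0 hx hxy hy
  have hGL : G Λ3 < 0 := by
    have : Λ3 ^ (-3 : ℤ) < 1 := zpow_lt_one_of_neg₀ hΛ3 (by norm_num)
    simp only [hG]
    nlinarith
  obtain ⟨a, ⟨ha0, ha1⟩, haP⟩ : ∃ a ∈ Set.Ioo (0:ℝ) 1,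
      (1 - t) * (a - Λ3) * a ^ 3 + t * (1 - a ^ 3) = 0 := by
    have hc : ContinuousOn (fun a : ℝ => (1 - t) * (a - Λ3) * a ^ 3 + t * (1 - a ^ 3))
      (Set.Icc 0 1) := by fun_prop
    have := intermediate_value_Ioo' zero_le_one hc
    exact this ⟨by norm_num; nlinarith, by norm_num; exact ht0⟩
  have hGa : G a = 0 := by
    have e : a ^ (-3 : ℤ) = (a ^ 3)⁻¹ := by
      rw [zpow_neg]; rfl
    simp only [hG, e]
    field_simp
    linarith
  have hpos : ∀ y, 0 < y → y < a → 0 < G y := fun y hy hya => by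
    have := hconv y a hy hya (by linarith)
    rw [hGa] at this
    have h2 : (a - y) * G Λ3 < 0 := mul_neg_of_pos_of_neg (by linarith) hGL
    exact pos_of_mul_pos_right (a := Λ3 - a) (by linarith) (by linarith)
  have hneg : ∀ y, a < y → y < Λ3 → G y < 0 := fun y hay hy => by
    have := hconv a y ha0 hay hy
    rw [hGa] at this
    have h2 : (y - a) * G Λ3 < 0 := mul_neg_of_pos_of_neg (by linarith) hGL
    by_contra! h
    nlinarith [mul_nonneg (show 0 ≤ Λ3 - a by linarith) h]
  refine ⟨a, ha0, by linarith, by rw [(hd a ha0).deriv, hGa], ?_, ha1, ?_, ?_⟩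
  · intro b hb hbL h
    rw [(hd b hb).deriv] at h
    rcases lt_trichotomy b a with h1 | h1 | h1
    · linarith [hpos b hb h1]
    · exact h1
    · linarith [hneg b h1 hbL]
  · refine strictMonoOn_of_deriv_pos (convex_Ioc 0 a)
      (fun y hy => (hd y hy.1).continuousAt.continuousWithinAt) fun y hy => ?_
    rw [interior_Ioc] at hy
    rw [(hd y hy.1).deriv]
    exact hpos y hy.1 hy.2
  · refine strictAntiOn_of_deriv_neg (convex_Icc a Λ3)
      (fun y hy => (hd y (by linarith [hy.1])).continuousAt.continuousWithinAt) fun y hy => ?_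
    rw [interior_Icc] at hy
    rw [(hd y (by linarith [hy.1])).deriv]
    exact hneg y hy.1 hy.2
end

section
/- With $K$ as in the context and $G(x,y) = \frac12 x^2 + \frac12 (y-\Lambda_3)^2$, one has $K(x,y) < G(x,y)$ for all $x \in \mathbb{R}$ and all $y > 0$. -/
/-- The key inequality of Section 5.3 of the paper: `K(x,y) < G(x,y)` for all `x ∈ ℝ`
and `y > 0`. -/
theorem stmt_10 (Λ2 Λ3 ε0 B : ℝ) (f : ℝ → ℝ)
    (hΛ2 : 1 < Λ2) (hΛ23 : Λ2 < Λ3)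
    (hε0 : 0 < ε0) (hε0' : ε0 < (Λ3 - Λ2) / 2)
    (hB : ∀ y ∈ Set.Icc (Λ2 + ε0) (Λ2 + 2 * ε0),
      (y - Λ3) ^ 2 / 2 + B + 1 + 1 / (2 * y ^ 2) + y ≤ 0)
    (hf : ContDiff ℝ (⊤ : ℕ∞) f) (hfmono : Monotone f)
    (hfrange : ∀ y, f y ∈ Set.Icc (0 : ℝ) 1)
    (hf0 : ∀ y, y ≤ Λ2 + ε0 → f y = 0)
    (hf1 : ∀ y, Λ2 + 2 * ε0 ≤ y → f y = 1) :
    ∀ x y : ℝ, 0 < y → Kfun Λ3 B f x y < Gfun Λ3 x y := by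
  intro x y hy
  have h1 := hB (Λ2 + ε0) ⟨le_refl _, by linarith⟩
  have h2 : 0 ≤ 1 / (2 * (Λ2 + ε0) ^ 2) := by positivity
  have hBneg : B < -1 := by nlinarith [sq_nonneg (Λ2 + ε0 - Λ3)]
  have hH : H2K y < Gfun Λ3 x y := by
    unfold H2K Gfun
    have h3 : 0 ≤ 1 / (2 * y ^ 2) := by positivity
    nlinarith [sq_nonneg x, sq_nonneg (y - Λ3)]
  have hF : Ffun Λ3 B x y < Gfun Λ3 x y := by
    unfold Ffun Gfun
    nlinarith [sq_nonneg x, Real.neg_one_le_cos (x / 2)]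
  obtain ⟨ha, hb⟩ := hfrange y
  unfold Kfun
  rcases ha.eq_or_lt with h | h
  · rw [← h]
    linarith
  · have h4 := mul_lt_mul_of_pos_left hF h
    have h5 := mul_le_mul_of_nonneg_left hH.le (sub_nonneg.2 hb)
    linarith
end

section
/- With $K$ as in the context, define $H(x_1,x_2,y_1,y_2) = \frac12(x_1^2+y_1^2) + K(x_2,y_2)$ and the vector field $Y_1(z) = \big(\frac12 x_1,\ \frac14\sin\frac{x_2}{2},\ \frac12 y_1,\ (y_2-\Lambda_3)(1-\frac18\cos\frac{x_2}{2})\big)$ at $z=(x_1,x_2,y_1,y_2)$. Then at every point $z$ with $0 \le x_2 \le 4\pi$ and $y_2 > 1$ that is different from the three points $(0,0,0,\Lambda_3)$, $(0,2\pi,0,\Lambda_3)$, $(0,4\pi,0,\Lambda_3)$, one has $\langle \nabla H(z), Y_1(z)\rangle > 0$. -/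
/-- The Hamiltonian `H(x₁,x₂,y₁,y₂) = ½(x₁² + y₁²) + K(x₂,y₂)` on `ℝ⁴`,
with coordinates ordered as `(x₁, x₂, y₁, y₂)`. -/
noncomputable def Hfull (Λ3 B : ℝ) (f : ℝ → ℝ) (z : ℝ × ℝ × ℝ × ℝ) : ℝ :=
  (z.1 ^ 2 + z.2.2.1 ^ 2) / 2 + Kfun Λ3 B f z.2.1 z.2.2.2

theorem Hfull_fderiv (Λ3 B : ℝ) (f : ℝ → ℝ) (hf : Differentiable ℝ f)
    (a b c d p q r s : ℝ) (hd : d ≠ 0) :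
    fderiv ℝ (Hfull Λ3 B f) (a, b, c, d) (p, q, r, s) =
      a * p + c * r + f d * (Real.sin (b / 2) / 2) * q
      + (deriv f d * (Ffun Λ3 B b d - H2K d) + (1 - f d) * (1 / d ^ 3 - 1)
        + f d * (d - Λ3)) * s := by
  have hdiff : DifferentiableAt ℝ (Hfull Λ3 B f) (a, b, c, d) := by
    unfold Hfull Kfun H2K Ffun
    have : (2 * d ^ 2) ≠ 0 := by positivity
    fun_prop (disch := simpa using hd)
  have hline : HasDerivAt (fun t : ℝ => ((a + t * p, b + t * q, c + t * r, d + t * s) : ℝ × ℝ × ℝ × ℝ))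
      (p, q, r, s) 0 := by
    have key : ∀ u v : ℝ, HasDerivAt (fun t : ℝ => u + t * v) v 0 := fun u v => by
      simpa using ((hasDerivAt_id (0 : ℝ)).mul_const v).const_add u
    exact (key a p).prodMk ((key b q).prodMk ((key c r).prodMk (key d s)))
  have h1 : HasDerivAt (fun t : ℝ => Hfull Λ3 B f (a + t * p, b + t * q, c + t * r, d + t * s))
      (fderiv ℝ (Hfull Λ3 B f) (a, b, c, d) (p, q, r, s)) 0 := by
    have h0 : HasFDerivAt (Hfull Λ3 B f) (fderiv ℝ (Hfull Λ3 B f) (a, b, c, d))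
        ((fun t : ℝ => ((a + t * p, b + t * q, c + t * r, d + t * s) : ℝ × ℝ × ℝ × ℝ)) 0) := by
      simpa using hdiff.hasFDerivAt
    exact h0.comp_hasDerivAt (0 : ℝ) hline
  refine h1.unique ?_
  have key : ∀ u v : ℝ, HasDerivAt (fun t : ℝ => u + t * v) v 0 := fun u v => by
    simpa using ((hasDerivAt_id (0 : ℝ)).mul_const v).const_add u
  have hF : HasDerivAt (fun t : ℝ => f (d + t * s)) (deriv f d * s) 0 := by
    refine HasDerivAt.comp (0 : ℝ) (h₂ := f) ?_ (key d s)
    simpa using (hf d).hasDerivAt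
  have hC : HasDerivAt (fun t : ℝ => Real.cos ((b + t * q) / 2)) (-Real.sin (b / 2) * (q / 2)) 0 := by
    simpa using ((key b q).div_const 2).cos
  have hH : HasDerivAt (fun t : ℝ => H2K (d + t * s)) ((1 / d ^ 3 - 1) * s) 0 := by
    have h2 := (((((key d s).pow 2).const_mul 2).inv (by simpa using hd)).neg).sub (key d s)
    have h3 : (fun t : ℝ => H2K (d + t * s)) = (-(fun t : ℝ => 2 * (d + t * s) ^ 2)⁻¹) - (fun t : ℝ => d + t * s) := by
      funext t; simp [H2K]
    rw [h3]
    refine h2.congr_deriv ?_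
    simp
    field_simp
    try ring
  have hFf : HasDerivAt (fun t : ℝ => Ffun Λ3 B (b + t * q) (d + t * s))
      ((d - Λ3) * s + Real.sin (b / 2) * (q / 2)) 0 := by
    have h2 := ((((((key d s).sub_const Λ3).pow 2).div_const 2).sub hC).add_const B)
    refine h2.congr_deriv ?_
    simp
    ring
  have h4 := ((((key a p).pow 2).add ((key c r).pow 2)).div_const 2).add
    (((hF.const_sub 1).mul hH).add (hF.mul hFf))
  refine h4.congr_deriv ?_
  simp
  ring

/-- Transversality of the Liouville vector field
`Y₁(z) = (½x₁, ¼sin(x₂/2), ½y₁, (y₂-Λ₃)(1 - ⅛cos(x₂/2)))` (Section 5.3 of the paper):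
`⟨∇H(z), Y₁(z)⟩ = dH(Y₁)(z) > 0` at every point with `0 ≤ x₂ ≤ 4π`, `y₂ > 1` other than
the three critical points. -/
theorem stmt_12 (Λ2 Λ3 ε0 B : ℝ) (f : ℝ → ℝ)
    (hΛ2 : 1 < Λ2) (hΛ23 : Λ2 < Λ3)
    (hε0 : 0 < ε0) (hε0' : ε0 < (Λ3 - Λ2) / 2)
    (hB : ∀ y ∈ Set.Icc (Λ2 + ε0) (Λ2 + 2 * ε0),
      (y - Λ3) ^ 2 / 2 + B + 1 + 1 / (2 * y ^ 2) + y ≤ 0)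
    (hf : ContDiff ℝ (⊤ : ℕ∞) f) (hfmono : Monotone f)
    (hfrange : ∀ y, f y ∈ Set.Icc (0 : ℝ) 1)
    (hf0 : ∀ y, y ≤ Λ2 + ε0 → f y = 0)
    (hf1 : ∀ y, Λ2 + 2 * ε0 ≤ y → f y = 1) :
    ∀ z : ℝ × ℝ × ℝ × ℝ, 0 ≤ z.2.1 → z.2.1 ≤ 4 * Real.pi → 1 < z.2.2.2 →
      z ≠ (0, 0, 0, Λ3) → z ≠ (0, 2 * Real.pi, 0, Λ3) → z ≠ (0, 4 * Real.pi, 0, Λ3) →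
      0 < fderiv ℝ (Hfull Λ3 B f) z
        (z.1 / 2, Real.sin (z.2.1 / 2) / 4, z.2.2.1 / 2,
          (z.2.2.2 - Λ3) * (1 - Real.cos (z.2.1 / 2) / 8)) := by
  rintro ⟨a, b, c, d⟩ hb0 hb1 hd n1 n2 n3
  simp only at hb0 hb1 hd ⊢
  rw [Hfull_fderiv Λ3 B f (hf.differentiable (by simp)) _ _ _ _ _ _ _ _ (by linarith)]
  have hc1 := Real.cos_le_one (b / 2)
  have hc0 := Real.neg_one_le_cos (b / 2)
  obtain ⟨hr0, hr1⟩ := hfrange d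
  have hsin : 0 ≤ f d * (Real.sin (b / 2) ^ 2 / 8) := by positivity
  have hw : 0 < 1 - Real.cos (b / 2) / 8 := by linarith
  rcases lt_or_ge d Λ3 with hlt | hge
  · have hA : deriv f d * (Ffun Λ3 B b d - H2K d) ≤ 0 := by
      by_cases hin : d ∈ Set.Icc (Λ2 + ε0) (Λ2 + 2 * ε0)
      · have h1 : 0 ≤ deriv f d := hfmono.deriv_nonneg
        refine mul_nonpos_of_nonneg_of_nonpos h1 ?_
        have := hB d hin
        unfold Ffun H2K
        linarith
      · have h0 : deriv f d = 0 := by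
          rcases lt_or_ge d (Λ2 + ε0) with h | h
          · have : f =ᶠ[nhds d] fun _ => 0 := by
              filter_upwards [Iio_mem_nhds h] with y hy using hf0 y (le_of_lt hy)
            rw [this.deriv_eq]; simp
          · have h' : Λ2 + 2 * ε0 < d := by
              by_contra hcon
              exact hin ⟨h, not_lt.mp hcon⟩
            have : f =ᶠ[nhds d] fun _ => 1 := by
              filter_upwards [Ioi_mem_nhds h'] with y hy using hf1 y (le_of_lt hy)
            rw [this.deriv_eq]; simp
        simp [h0]
    have hinv : 1 / d ^ 3 - 1 < 0 := by
      have : 1 < d ^ 3 := one_lt_pow₀ hd (by norm_num)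
      have := (div_lt_one (by linarith : (0 : ℝ) < d ^ 3)).2 this
      linarith
    have hS : (1 - f d) * (1 / d ^ 3 - 1) + f d * (d - Λ3) < 0 := by
      rcases eq_or_lt_of_le hr0 with h | h
      · rw [← h]; linarith
      · have := mul_neg_of_pos_of_neg h (sub_neg.2 hlt)
        have := mul_nonpos_of_nonneg_of_nonpos (sub_nonneg.2 hr1) hinv.le
        linarith
    have hP := mul_pos (mul_pos_of_neg_of_neg (add_neg_of_nonpos_of_neg hA hS) (sub_neg.2 hlt)) hw
    nlinarith [sq_nonneg a, sq_nonneg c]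
  · have hd2 : Λ2 + 2 * ε0 < d := by linarith
    have h0 : deriv f d = 0 := by
      have : f =ᶠ[nhds d] fun _ => 1 := by
        filter_upwards [Ioi_mem_nhds hd2] with y hy using hf1 y (le_of_lt hy)
      rw [this.deriv_eq]; simp
    rw [h0, hf1 d hd2.le]
    have hP : 0 ≤ (d - Λ3) ^ 2 * (1 - Real.cos (b / 2) / 8) := by positivity
    by_contra hcon
    have ha : a ^ 2 = 0 := by
      nlinarith [sq_nonneg a, sq_nonneg c, sq_nonneg (Real.sin (b / 2))]
    have hc : c ^ 2 = 0 := by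
      nlinarith [sq_nonneg a, sq_nonneg c, sq_nonneg (Real.sin (b / 2))]
    have hs : Real.sin (b / 2) ^ 2 = 0 := by
      nlinarith [sq_nonneg a, sq_nonneg c, sq_nonneg (Real.sin (b / 2))]
    have hq : (d - Λ3) ^ 2 * (1 - Real.cos (b / 2) / 8) = 0 := by
      nlinarith [sq_nonneg a, sq_nonneg c, sq_nonneg (Real.sin (b / 2))]
    have ha' : a = 0 := by simpa using ha
    have hc' : c = 0 := by simpa using hc
    have hs' : Real.sin (b / 2) = 0 := by simpa using hs
    have hd' : d = Λ3 := by
      rcases mul_eq_zero.1 hq with h | h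
      · have : d - Λ3 = 0 := by simpa using h
        linarith
      · linarith
    subst ha' hc' hd'
    obtain ⟨n, hn⟩ := Real.sin_eq_zero_iff.1 hs'
    have hpi := Real.pi_pos
    have hn0 : (-1 : ℝ) < n := by
      by_contra h
      nlinarith
    have hn3 : (n : ℝ) < 3 := by
      by_contra h
      nlinarith
    have hn0' : -1 < n := by exact_mod_cast hn0
    have hn3' : n < 3 := by exact_mod_cast hn3
    interval_cases n
    · apply n1
      have : b = 0 := by push_cast at hn; linarith
      rw [this]
    · apply n2
      have : b = 2 * Real.pi := by push_cast at hn; linarith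
      rw [this]
    · apply n3
      have : b = 4 * Real.pi := by push_cast at hn; linarith
      rw [this]
end

section
/- With $\hat H_2$ as in the context, one has $\hat H_2'(y) < 0$ for all $1 < y < \Lambda_3$ and $\hat H_2'(y) > 0$ for all $y > \Lambda_3$. -/
/-- The interpolated function `Ĥ₂(y) = (1 - f(y))(-1/(2y²) - y) + f(y)(½(y-Λ₃)² + B)`
from the appendix of the paper. -/
noncomputable def H2hat (Λ3 B : ℝ) (f : ℝ → ℝ) (y : ℝ) : ℝ :=
  (1 - f y) * (-(1 / (2 * y ^ 2)) - y) + f y * ((y - Λ3) ^ 2 / 2 + B)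

/-- Claim (A.3) of the paper: `Ĥ₂' < 0` on `(1, Λ₃)` and `Ĥ₂' > 0` on `(Λ₃, ∞)`. -/
theorem stmt_15 (Λ2 Λ3 ε B : ℝ) (f : ℝ → ℝ)
    (hΛ2 : 1 < Λ2) (hΛ23 : Λ2 < Λ3)
    (hε : 0 < ε) (hε' : ε < (Λ3 - Λ2) / 2)
    (hB : ∀ y ∈ Set.Icc (Λ2 + ε) (Λ2 + 2 * ε),
      (y - Λ3) ^ 2 / 2 + B + 1 / (2 * y ^ 2) + y ≤ 0)
    (hf : ContDiff ℝ (⊤ : ℕ∞) f) (hfmono : Monotone f)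
    (hfrange : ∀ y, f y ∈ Set.Icc (0 : ℝ) 1)
    (hf0 : ∀ y, y ≤ Λ2 + ε → f y = 0)
    (hf1 : ∀ y, Λ2 + 2 * ε ≤ y → f y = 1) :
    (∀ y : ℝ, 1 < y → y < Λ3 → deriv (H2hat Λ3 B f) y < 0) ∧
    (∀ y : ℝ, Λ3 < y → 0 < deriv (H2hat Λ3 B f) y) := by
  have hd : ∀ y : ℝ, 1 < y → deriv (H2hat Λ3 B f) y =
      (1 - f y) * (1 / y ^ 3 - 1) + f y * (y - Λ3)
        + deriv f y * ((y - Λ3) ^ 2 / 2 + B + 1 / (2 * y ^ 2) + y) := by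
    intro y hy
    have hy0 : y ≠ 0 := by linarith
    have h1 : HasDerivAt f (deriv f y) y :=
      ((hf.differentiable (by simp)) y).hasDerivAt
    have h2 : HasDerivAt (fun y : ℝ => 2 * y ^ 2) (2 * (2 * y)) y := by
      simpa using (hasDerivAt_pow 2 y).const_mul 2
    have h3 : HasDerivAt (fun y : ℝ => (2 * y ^ 2)⁻¹) (-(2 * (2 * y)) / (2 * y ^ 2) ^ 2) y :=
      h2.fun_inv (by positivity)
    have h4 : HasDerivAt (fun y : ℝ => (y - Λ3) ^ 2) (2 * (y - Λ3)) y := by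
      simpa using ((hasDerivAt_id y).sub_const Λ3).fun_pow 2
    have h5 := ((h1.const_sub 1).fun_mul (h3.fun_neg.fun_sub (hasDerivAt_id' y))).fun_add
      (h1.fun_mul ((h4.div_const 2).add_const B))
    have h6 : H2hat Λ3 B f = fun y => (1 - f y) * (-(2 * y ^ 2)⁻¹ - y)
        + f y * ((y - Λ3) ^ 2 / 2 + B) := by
      funext z
      simp only [H2hat, one_div]
    rw [h6, h5.deriv]
    field_simp
    ring
  have hlow : ∀ y, y < Λ2 + ε → deriv f y = 0 := by
    intro y hy
    have : f =ᶠ[nhds y] fun _ => (0 : ℝ) := by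
      filter_upwards [Iio_mem_nhds hy] with z hz
      exact hf0 z (le_of_lt hz)
    rw [this.deriv_eq]
    simp
  have hhigh : ∀ y, Λ2 + 2 * ε < y → deriv f y = 0 := by
    intro y hy
    have : f =ᶠ[nhds y] fun _ => (1 : ℝ) := by
      filter_upwards [Ioi_mem_nhds hy] with z hz
      exact hf1 z (le_of_lt hz)
    rw [this.deriv_eq]
    simp
  constructor
  · intro y hy hy3
    rw [hd y hy]
    have hA : deriv f y * ((y - Λ3) ^ 2 / 2 + B + 1 / (2 * y ^ 2) + y) ≤ 0 := by
      rcases lt_or_ge y (Λ2 + ε) with h | h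
      · rw [hlow y h, zero_mul]
      rcases lt_or_ge (Λ2 + 2 * ε) y with h' | h'
      · rw [hhigh y h', zero_mul]
      exact mul_nonpos_of_nonneg_of_nonpos hfmono.deriv_nonneg (hB y ⟨h, h'⟩)
    have hc : 1 / y ^ 3 - 1 < 0 := by
      have h1 : 1 < y ^ 3 := one_lt_pow₀ hy (by norm_num)
      have := (div_lt_one (by linarith : (0 : ℝ) < y ^ 3)).2 h1
      linarith
    obtain ⟨ha, hb⟩ := hfrange y
    rcases eq_or_lt_of_le ha with h | h
    · rw [← h] at *
      linarith
    · have h1 := mul_neg_of_pos_of_neg h (sub_neg.2 hy3)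
      have h2 := mul_nonpos_of_nonneg_of_nonpos (sub_nonneg.2 hb) hc.le
      linarith
  · intro y hy
    rw [hd y (by linarith), hhigh y (by linarith), hf1 y (by linarith)]
    linarith
end

section
/- With $\hat H_2$ as in the context, fix $\Lambda_1$ with $1 < \Lambda_1 < \Lambda_2$ and set $c = -\frac{1}{2\Lambda_1^2} - \Lambda_1$. Then for every $(x_1,x_2,y_1,y_2) \in \mathbb{R}^4$ with $y_2 > 1$ and $\frac12(x_1^2+y_1^2) + \hat H_2(y_2) = c$, one has $\frac12(x_1^2+y_1^2) + (y_2-\Lambda_3)\,\hat H_2'(y_2) > 0$. -/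
/-- The transversality claim of the appendix of the paper: along the level set
`½(x₁² + y₁²) + Ĥ₂(y₂) = c` with `c = -1/(2Λ₁²) - Λ₁`, one has
`dĤ(Ŷ) = ½(x₁² + y₁²) + (y₂ - Λ₃) Ĥ₂'(y₂) > 0`. -/
theorem stmt_16 (Λ1 Λ2 Λ3 ε B c : ℝ) (f : ℝ → ℝ)
    (hΛ2 : 1 < Λ2) (hΛ23 : Λ2 < Λ3)
    (hε : 0 < ε) (hε' : ε < (Λ3 - Λ2) / 2)
    (hB : ∀ y ∈ Set.Icc (Λ2 + ε) (Λ2 + 2 * ε),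
      (y - Λ3) ^ 2 / 2 + B + 1 / (2 * y ^ 2) + y ≤ 0)
    (hf : ContDiff ℝ (⊤ : ℕ∞) f) (hfmono : Monotone f)
    (hfrange : ∀ y, f y ∈ Set.Icc (0 : ℝ) 1)
    (hf0 : ∀ y, y ≤ Λ2 + ε → f y = 0)
    (hf1 : ∀ y, Λ2 + 2 * ε ≤ y → f y = 1)
    (hΛ1 : 1 < Λ1) (hΛ12 : Λ1 < Λ2)
    (hc : c = -(1 / (2 * Λ1 ^ 2)) - Λ1) :
    ∀ x1 x2 y1 y2 : ℝ, 1 < y2 →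
      (x1 ^ 2 + y1 ^ 2) / 2 + H2hat Λ3 B f y2 = c →
      0 < (x1 ^ 2 + y1 ^ 2) / 2 + (y2 - Λ3) * deriv (H2hat Λ3 B f) y2 := by
  intro x1 x2 y1 y hy hlev
  have hfd : DifferentiableAt ℝ f y := (hf.differentiable (by simp)).differentiableAt
  have hy0 : y ≠ 0 := by linarith
  have hder : HasDerivAt (H2hat Λ3 B f)
      (deriv f y * (((y - Λ3) ^ 2 / 2 + B) + 1 / (2 * y ^ 2) + y)
        + (1 - f y) * (1 / y ^ 3 - 1) + f y * (y - Λ3)) y := by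
    have h1 : HasDerivAt (fun y : ℝ => 2 * y ^ 2) (4 * y) y := by
      have := ((hasDerivAt_id y).pow 2).const_mul 2
      exact this.congr_deriv (by simp; ring)
    have h2 : HasDerivAt (fun y : ℝ => -(1 / (2 * y ^ 2)) - y) (1 / y ^ 3 - 1) y := by
      have := ((h1.inv (by positivity)).neg).sub (hasDerivAt_id y)
      have e : (fun y : ℝ => -(1 / (2 * y ^ 2)) - y) = -(fun y : ℝ => 2 * y ^ 2)⁻¹ - id := by
        funext z; simp
      rw [e]
      exact this.congr_deriv (by field_simp; ring)
    have h3 : HasDerivAt (fun y : ℝ => (y - Λ3) ^ 2 / 2 + B) (y - Λ3) y := by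
      have := ((((hasDerivAt_id y).sub_const Λ3).pow 2).div_const 2).add_const B
      exact this.congr_deriv (by simp)
    have h4 := ((hfd.hasDerivAt.const_sub 1).mul h2).add (hfd.hasDerivAt.mul h3)
    exact h4.congr_deriv (by ring)
  rw [hder.deriv]
  have hf' : 0 ≤ deriv f y := hfmono.deriv_nonneg
  have hr : 0 ≤ (x1 ^ 2 + y1 ^ 2) / 2 := by positivity
  have hzero1 : Λ2 + 2 * ε < y → deriv f y = 0 := by
    intro h
    have : f =ᶠ[nhds y] fun _ => (1 : ℝ) := by
      filter_upwards [lt_mem_nhds h] with z hz using hf1 z hz.le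
    rw [this.deriv_eq]; simp
  have hzero0 : y < Λ2 + ε → deriv f y = 0 := by
    intro h
    have : f =ᶠ[nhds y] fun _ => (0 : ℝ) := by
      filter_upwards [gt_mem_nhds h] with z hz using hf0 z hz.le
    rw [this.deriv_eq]; simp
  rcases lt_or_ge y Λ3 with hlt | hge
  · have hA : deriv f y * (((y - Λ3) ^ 2 / 2 + B) + 1 / (2 * y ^ 2) + y) ≤ 0 := by
      rcases lt_or_ge y (Λ2 + ε) with h | h
      · simp [hzero0 h]
      rcases lt_or_ge (Λ2 + 2 * ε) y with h' | h'
      · simp [hzero1 h']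
      exact mul_nonpos_of_nonneg_of_nonpos hf' (hB y ⟨h, h'⟩)
    have hn : 1 / y ^ 3 - 1 < 0 := by
      have : 1 < y ^ 3 := one_lt_pow₀ hy (by norm_num)
      have := (div_lt_one (by linarith)).2 this
      linarith
    obtain ⟨ha, hb⟩ := hfrange y
    have hC : (1 - f y) * (1 / y ^ 3 - 1) + f y * (y - Λ3) < 0 := by
      rcases lt_or_ge (f y) 1 with h | h
      · have := mul_neg_of_pos_of_neg (sub_pos.2 h) hn
        have := mul_nonpos_of_nonneg_of_nonpos ha (sub_neg.2 hlt).le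
        linarith
      · have : f y = 1 := le_antisymm hb h
        rw [this]; linarith
    have := mul_pos_of_neg_of_neg (sub_neg.2 hlt) (add_neg_of_nonpos_of_neg hA hC)
    rw [← add_assoc] at this
    linarith
  · rw [hf1 y (by linarith), hzero1 (by linarith)]
    rcases hge.lt_or_eq with h | h
    · have := mul_pos (sub_pos.2 h) (sub_pos.2 h)
      linarith
    · have hBc := hB (Λ2 + ε) ⟨le_rfl, by linarith⟩
      rw [H2hat, hf1 y (by linarith), ← h, hc] at hlev
      rw [← h]
      have key : Λ1 + 1 / (2 * Λ1 ^ 2) < (Λ2 + ε) + 1 / (2 * (Λ2 + ε) ^ 2) := by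
        have hw : Λ1 < Λ2 + ε := by linarith
        generalize Λ2 + ε = w at hw
        have hw1 : 1 < w := by linarith
        have e : w + 1 / (2 * w ^ 2) - (Λ1 + 1 / (2 * Λ1 ^ 2))
            = (w - Λ1) * (2 * w ^ 2 * Λ1 ^ 2 - (w + Λ1)) / (2 * w ^ 2 * Λ1 ^ 2) := by
          field_simp; ring
        have h5 : 1 < w * Λ1 := by nlinarith
        have h6 : w < w ^ 2 * Λ1 ^ 2 := by nlinarith [mul_pos (sub_pos.2 hΛ1) (sub_pos.2 h5)]
        have h7 : Λ1 < w ^ 2 * Λ1 ^ 2 := by linarith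
        have : 0 < (w - Λ1) * (2 * w ^ 2 * Λ1 ^ 2 - (w + Λ1)) / (2 * w ^ 2 * Λ1 ^ 2) :=
          div_pos (mul_pos (by linarith) (by linarith)) (by positivity)
        linarith
      have := sq_nonneg (Λ2 + ε - Λ3)
      simp at hlev hBc key ⊢
      linarith
end

section
/- With $\hat H_2$ as in the context, fix $\Lambda_1$ with $1 < \Lambda_1 < \Lambda_2$, set $c = -\frac{1}{2\Lambda_1^2} - \Lambda_1$ and $\Lambda_{\max} = \Lambda_3 + \sqrt{2(c-B)}$ (which is well defined since $c > B$). Then: (i) $\hat H_2(\Lambda_1) = c = \hat H_2(\Lambda_{\max})$ and $\hat H_2(y) < c$ for all $y \in (\Lambda_1, \Lambda_{\max})$; (ii) if $y : \mathbb{R} \to (\Lambda_1,\Lambda_{\max})$ is differentiable and strictly increasing with $\lim_{s\to-\infty} y(s) = \Lambda_1$, $\lim_{s\to+\infty} y(s) = \Lambda_{\max}$, and $s_0 \in \mathbb{R}$ satisfies $y(s_0) = \Lambda_3$, then the function $r(s) = \sqrt{2(c - \hat H_2(y(s)))}$ is positive, strictly increasing on $(-\infty, s_0]$, strictly decreasing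 on $[s_0,\infty)$, and $r(s) \to 0$ as $s \to \pm\infty$. -/
open Filter

lemma H2_anti_aux {a b : ℝ} (ha : 1 < a) (hab : a < b) :
    -(1 / (2 * b ^ 2)) - b < -(1 / (2 * a ^ 2)) - a := by
  have hb : 1 < b := ha.trans hab
  have h1 : 1 / (2 * a ^ 2) - 1 / (2 * b ^ 2) = (b - a) * ((a + b) / (2 * a ^ 2 * b ^ 2)) := by
    field_simp
    ring
  have h2 : (a + b) / (2 * a ^ 2 * b ^ 2) < 1 := by
    rw [div_lt_one (by positivity)]
    have h3 : a < a * b := by nlinarith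
    have h4 : b < a * b := by nlinarith
    have h5 : a * b < (a * b) * (a * b) := by nlinarith
    nlinarith
  nlinarith

lemma H2hat_step_aux {Λ3 B : ℝ} {f : ℝ → ℝ} {a b : ℝ} (ha : 1 < a) (hab : a < b) (hb : b ≤ Λ3)
    (hr : f b ∈ Set.Icc (0 : ℝ) 1)
    (h : (f b - f a) * (((a - Λ3) ^ 2 / 2 + B) - (-(1 / (2 * a ^ 2)) - a)) ≤ 0) :
    H2hat Λ3 B f b < H2hat Λ3 B f a := by
  unfold H2hat
  have h1 := H2_anti_aux ha hab
  have h2 : (b - Λ3) ^ 2 / 2 + B < (a - Λ3) ^ 2 / 2 + B := by nlinarith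
  obtain ⟨h0, h1'⟩ := hr
  generalize -(1 / (2 * b ^ 2)) - b = P at *
  generalize -(1 / (2 * a ^ 2)) - a = Q at *
  generalize (b - Λ3) ^ 2 / 2 + B = R at *
  generalize (a - Λ3) ^ 2 / 2 + B = S at *
  have key : (1 - f b) * P + f b * R < (1 - f b) * Q + f b * S := by
    rcases h0.eq_or_lt with h0 | h0
    · rw [← h0]; linarith
    · nlinarith [mul_lt_mul_of_pos_left h2 h0,
        mul_le_mul_of_nonneg_left h1.le (sub_nonneg.2 h1')]
  nlinarith

/-- Appendix of the paper: with `c = -1/(2Λ₁²) - Λ₁` and `Λ_max = Λ₃ + √(2(c-B))`: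
(i) `Ĥ₂(Λ₁) = c = Ĥ₂(Λ_max)` and `Ĥ₂ < c` on `(Λ₁, Λ_max)`; (ii) for every strictly
increasing differentiable `y : ℝ → (Λ₁, Λ_max)` tending to `Λ₁` at `-∞` and `Λ_max` at
`+∞`, and `s₀` with `y(s₀) = Λ₃`, the radius `r(s) = √(2(c - Ĥ₂(y(s))))` is positive,
strictly increasing on `(-∞, s₀]`, strictly decreasing on `[s₀, ∞)`, and tends to `0`
at `±∞`. -/
theorem stmt_18 (Λ1 Λ2 Λ3 ε B c Λmax : ℝ) (f : ℝ → ℝ)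
    (hΛ2 : 1 < Λ2) (hΛ23 : Λ2 < Λ3)
    (hε : 0 < ε) (hε' : ε < (Λ3 - Λ2) / 2)
    (hB : ∀ y ∈ Set.Icc (Λ2 + ε) (Λ2 + 2 * ε),
      (y - Λ3) ^ 2 / 2 + B + 1 / (2 * y ^ 2) + y ≤ 0)
    (hf : ContDiff ℝ (⊤ : ℕ∞) f) (hfmono : Monotone f)
    (hfrange : ∀ y, f y ∈ Set.Icc (0 : ℝ) 1)
    (hf0 : ∀ y, y ≤ Λ2 + ε → f y = 0)
    (hf1 : ∀ y, Λ2 + 2 * ε ≤ y → f y = 1)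
    (hΛ1 : 1 < Λ1) (hΛ12 : Λ1 < Λ2)
    (hc : c = -(1 / (2 * Λ1 ^ 2)) - Λ1)
    (hΛmax : Λmax = Λ3 + Real.sqrt (2 * (c - B))) :
    (H2hat Λ3 B f Λ1 = c ∧ H2hat Λ3 B f Λmax = c ∧
      ∀ y ∈ Set.Ioo Λ1 Λmax, H2hat Λ3 B f y < c) ∧
    (∀ y : ℝ → ℝ, (∀ s, y s ∈ Set.Ioo Λ1 Λmax) → Differentiable ℝ y → StrictMono y →
      Tendsto y atBot (nhds Λ1) → Tendsto y atTop (nhds Λmax) →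
      ∀ s0 : ℝ, y s0 = Λ3 →
        (∀ s, 0 < Real.sqrt (2 * (c - H2hat Λ3 B f (y s)))) ∧
        StrictMonoOn (fun s => Real.sqrt (2 * (c - H2hat Λ3 B f (y s)))) (Set.Iic s0) ∧
        StrictAntiOn (fun s => Real.sqrt (2 * (c - H2hat Λ3 B f (y s)))) (Set.Ici s0) ∧
        Tendsto (fun s => Real.sqrt (2 * (c - H2hat Λ3 B f (y s)))) atBot (nhds 0) ∧
        Tendsto (fun s => Real.sqrt (2 * (c - H2hat Λ3 B f (y s)))) atTop (nhds 0)) := by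
  have anti : ∀ a b, Λ1 ≤ a → a < b → b ≤ Λ3 → H2hat Λ3 B f b < H2hat Λ3 B f a := by
    have A : ∀ a b, Λ2 + ε ≤ a → a < b → b ≤ Λ3 → H2hat Λ3 B f b < H2hat Λ3 B f a := by
      intro a b h1 h2 h3
      refine H2hat_step_aux (by linarith) h2 h3 (hfrange b) ?_
      by_cases h4 : Λ2 + 2 * ε ≤ a
      · rw [hf1 a h4, hf1 b (by linarith)]; simp
      · have := hB a ⟨h1, by linarith⟩
        exact mul_nonpos_of_nonneg_of_nonpos (sub_nonneg.2 (hfmono h2.le)) (by linarith)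
    have C : ∀ a b, Λ1 ≤ a → a < b → b ≤ Λ2 + ε → H2hat Λ3 B f b < H2hat Λ3 B f a := by
      intro a b h1 h2 h3
      refine H2hat_step_aux (by linarith) h2 (by linarith) (hfrange b) ?_
      rw [hf0 a (by linarith), hf0 b h3]; simp
    intro a b h1 h2 h3
    rcases le_or_gt (Λ2 + ε) a with h | h
    · exact A a b h h2 h3
    · rcases le_or_gt b (Λ2 + ε) with h' | h'
      · exact C a b h1 h2 h'
      · exact (A _ b le_rfl h' h3).trans (C a _ h1 h le_rfl)
  have hV : ∀ y, Λ3 ≤ y → H2hat Λ3 B f y = (y - Λ3) ^ 2 / 2 + B := by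
    intro y hy
    unfold H2hat
    rw [hf1 y (by linarith)]; ring
  have e1 : H2hat Λ3 B f Λ1 = c := by
    unfold H2hat
    rw [hf0 Λ1 (by linarith), hc]; ring
  have hBc : B < c := by
    have := anti Λ1 Λ3 le_rfl (by linarith) le_rfl
    rw [e1, hV Λ3 le_rfl] at this
    simpa using this
  have hsq : (Λmax - Λ3) ^ 2 = 2 * (c - B) := by
    rw [hΛmax, add_sub_cancel_left, Real.sq_sqrt (by linarith)]
  have h3m : Λ3 ≤ Λmax := by
    rw [hΛmax]; linarith [Real.sqrt_nonneg (2 * (c - B))]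
  have e2 : H2hat Λ3 B f Λmax = c := by
    rw [hV _ h3m, hsq]; ring
  have mono : ∀ a b, Λ3 ≤ a → a < b → H2hat Λ3 B f a < H2hat Λ3 B f b := by
    intro a b h1 h2
    rw [hV a h1, hV b (by linarith)]
    nlinarith
  have lt : ∀ y ∈ Set.Ioo Λ1 Λmax, H2hat Λ3 B f y < c := by
    rintro y ⟨h1, h2⟩
    rcases le_or_gt y Λ3 with h | h
    · rw [← e1]; exact anti _ _ le_rfl h1 h
    · rw [← e2]; exact mono _ _ h.le h2
  have cont : ∀ x, 1 < x → ContinuousAt (H2hat Λ3 B f) x := by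
    intro x hx
    have hfc : ContinuousAt f x := hf.continuous.continuousAt
    have : (2 * x ^ 2) ≠ 0 := by positivity
    unfold H2hat
    fun_prop (disch := assumption)
  have lim : ∀ (y : ℝ → ℝ) (l : Filter ℝ) (x : ℝ), 1 < x → H2hat Λ3 B f x = c →
      Tendsto y l (nhds x) →
      Tendsto (fun s => Real.sqrt (2 * (c - H2hat Λ3 B f (y s)))) l (nhds 0) := by
    intro y l x hx he hy
    have h := ((((cont x hx).tendsto.comp hy).const_sub c).const_mul 2).sqrt
    simpa [he] using h
  refine ⟨⟨e1, e2, lt⟩, ?_⟩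
  intro y hy _ hym hbot htop s0 hs0
  refine ⟨fun s => Real.sqrt_pos.2 (by linarith [lt _ (hy s)]), ?_, ?_,
    lim y _ _ hΛ1 e1 hbot, lim y _ _ (by linarith) e2 htop⟩
  · intro s _ t ht hst
    have h := anti (y s) (y t) (hy s).1.le (hym hst) (hs0 ▸ hym.monotone ht)
    exact Real.sqrt_lt_sqrt (by linarith [lt _ (hy s)]) (by linarith)
  · intro s hs t _ hst
    have h := mono (y s) (y t) (hs0 ▸ hym.monotone hs) (hym hst)
    exact Real.sqrt_lt_sqrt (by linarith [lt _ (hy t)]) (by linarith)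
end
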